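/- arXiv:1706.00234 — 2 statements merged into one kernel-verified Lean document; each statement's English description precedes it below -/
import Mathlib

section
/- Let f₀, f₁, …, f_p : ℝⁿ → ℝ be nonconstant polynomial functions, let S := {x ∈ ℝⁿ : f₁(x) ≤ 0, …, f_p(x) ≤ 0} be nonempty, assume f₀ is bounded from below on S, and set f* := inf_{x ∈ S} f₀(x). Assume the Mangasarian–Fromovitz property at infinity ((MF)∞) holds for the problem inf_{x ∈ S} f₀(x). If f₀ does not attain its infimum f* on S, then either f* = 0 or there exist a nonempty set J ⊆ {1, …, n}, a vector q ∈ ℝⁿ with min_{j ∈ J} q_j < 0, a point x* ∈ ℝⁿ, and scalars λ*₀, λ*₁, …, λ*_p satisfying, with Δ_i := Δ(q, Γ(f_i)): (i) x*_j = 0 ⟺ j ∉ J; (ii) f* = f_{0,Δ₀}(x*), Δ₀ ⊆ ℝ^J, and d(q, Γ(f₀)) = 0; (iii) λ*₀ ∇f_{0,Δ₀}(x*) + Σ_{i=1}^p λ*_i ∇f_{i,Δ_i}(x*) = 0; (iv) f_{i,Δ_i}(x*) ≤ 0 and λ*_i f_{i,Δ_i}(x*) = 0 for i = 1, …, p; (v)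 all λ*_i are nonnegative and not all zero; and moreover such that if there exists a nonzero vector v ∈ ℝⁿ with ⟨∇f_{i,Δ_i}(x*), v⟩ < 0 for every i ∈ {1, …, p} with f_{i,Δ_i}(x*) = 0 and f_i restricted to ℝ^J not constant, then the multipliers can be chosen with λ*₀ = 1. -/
open MvPolynomial Set Filter
open scoped Classical

noncomputable section

/-- The exponent vector of a monomial, viewed as a point of `ℝⁿ`. -/
def expVec {n : ℕ} (κ : Fin n →₀ ℕ) : Fin n → ℝ := fun j => (κ j : ℝ)

/-- The Newton polyhedron at infinity `Γ(f)`: the convex hull of the support of `f`. -/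
def NewtonPolyhedron {n : ℕ} (f : MvPolynomial (Fin n) ℝ) : Set (Fin n → ℝ) :=
  convexHull ℝ (expVec '' (f.support : Set (Fin n →₀ ℕ)))

/-- `d(q, Γ(f)) := min {⟨q, κ⟩ : κ ∈ Γ(f)}`. -/
def NewtonD {n : ℕ} (f : MvPolynomial (Fin n) ℝ) (q : Fin n → ℝ) : ℝ :=
  sInf ((fun κ : Fin n → ℝ => ∑ j, q j * κ j) '' NewtonPolyhedron f)

/-- `Δ(q, Γ(f)) := {κ ∈ Γ(f) : ⟨q, κ⟩ = d(q, Γ(f))}`. -/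
def NewtonFace {n : ℕ} (f : MvPolynomial (Fin n) ℝ) (q : Fin n → ℝ) : Set (Fin n → ℝ) :=
  {κ ∈ NewtonPolyhedron f | ∑ j, q j * κ j = NewtonD f q}

/-- For a set `Δ ⊆ ℝⁿ`, the polynomial `f_Δ := ∑_{κ ∈ Δ} a_κ x^κ`. -/
def facePoly {n : ℕ} (f : MvPolynomial (Fin n) ℝ) (Δ : Set (Fin n → ℝ)) :
    MvPolynomial (Fin n) ℝ :=
  ∑ κ ∈ f.support.filter (fun κ => expVec κ ∈ Δ), monomial κ (f.coeff κ)

/-- `ℝ^J := {x ∈ ℝⁿ : x_j = 0 for all j ∉ J}`. -/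
def RJ {n : ℕ} (J : Set (Fin n)) : Set (Fin n → ℝ) := {x | ∀ j ∉ J, x j = 0}

/-- The restriction of `f` to `ℝ^J` is not constant. -/
def NotConstOn {n : ℕ} (f : MvPolynomial (Fin n) ℝ) (J : Set (Fin n)) : Prop :=
  ∃ x ∈ RJ J, ∃ y ∈ RJ J, eval x f ≠ eval y f

/-- The Mangasarian–Fromovitz property at infinity for `inf {f 0 x : f i x ≤ 0, i = 1,…,p}`. -/
def MFinfty {n p : ℕ} (f : Fin (p + 1) → MvPolynomial (Fin n) ℝ) : Prop :=
  ∀ J : Set (Fin n), J.Nonempty → ∀ q x : Fin n → ℝ,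
    NewtonD (f 0) q < 0 →
    (∀ i, NotConstOn (f i) J → NewtonFace (f i) q ⊆ RJ J) →
    (∀ j, x j = 0 ↔ j ∉ J) →
    (∀ i, i ≠ 0 → eval x (facePoly (f i) (NewtonFace (f i) q)) ≤ 0) →
    ∃ v : Fin n → ℝ, v ≠ 0 ∧ ∀ i, NotConstOn (f i) J →
      eval x (facePoly (f i) (NewtonFace (f i) q)) = 0 →
      ∑ j, eval x (pderiv j (facePoly (f i) (NewtonFace (f i) q))) * v j < 0

/-- Kouchnirenko non-degeneracy at infinity. -/
def NondegenerateAtInfinity {n : ℕ} (f : MvPolynomial (Fin n) ℝ) : Prop :=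
  ∀ q : Fin n → ℝ, NewtonD f q < 0 →
    ∀ x : Fin n → ℝ, (∀ j, x j ≠ 0) →
      ¬ ∀ j, eval x (pderiv j (facePoly f (NewtonFace f q))) = 0

/-- A convenient polynomial. -/
def Convenient {n : ℕ} (f : MvPolynomial (Fin n) ℝ) : Prop :=
  ∀ j : Fin n, ∃ c : ℝ, 0 < c ∧ c • (Pi.single j 1 : Fin n → ℝ) ∈ NewtonPolyhedron f

/-- A bad face of `Γ(f)`. -/
def BadFace {n : ℕ} (f : MvPolynomial (Fin n) ℝ) (Δ : Set (Fin n → ℝ)) : Prop :=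
  (∃ q : Fin n → ℝ, Δ = NewtonFace f q) ∧
  (0 : Fin n → ℝ) ∈ affineSpan ℝ Δ ∧
  ∃ q : Fin n → ℝ, (∃ i j, q i * q j < 0) ∧
    {κ : Fin n → ℝ | ∑ j, q j * κ j = 0} ∩ NewtonPolyhedron f = Δ

/-- The set of critical values of `f`. -/
def K0 {n : ℕ} (f : MvPolynomial (Fin n) ℝ) : Set ℝ :=
  {c | ∃ x : Fin n → ℝ, (∀ j, eval x (pderiv j f) = 0) ∧ eval x f = c}

/-- `Σ∞(f)`: critical values of `f_Δ` over all bad faces `Δ`. -/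
def SigmaInfty {n : ℕ} (f : MvPolynomial (Fin n) ℝ) : Set ℝ :=
  {c | ∃ Δ : Set (Fin n → ℝ), BadFace f Δ ∧ ∃ x : Fin n → ℝ,
    (∀ j, eval x (pderiv j (facePoly f Δ)) = 0) ∧ eval x (facePoly f Δ) = c}

/-- `Σ∞'(f)`: critical values of `f_Δ` on `(ℝ ∖ {0})ⁿ` over all bad faces `Δ`. -/
def SigmaInfty' {n : ℕ} (f : MvPolynomial (Fin n) ℝ) : Set ℝ :=
  {c | ∃ Δ : Set (Fin n → ℝ), BadFace f Δ ∧ ∃ x : Fin n → ℝ, (∀ j, x j ≠ 0) ∧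
    (∀ j, eval x (pderiv j (facePoly f Δ)) = 0) ∧ eval x (facePoly f Δ) = c}

/-- The Euclidean norm on `Fin k → ℝ`. -/
def euclNorm {k : ℕ} (x : Fin k → ℝ) : ℝ := Real.sqrt (∑ j, (x j) ^ 2)

/-- Basic semialgebraic subsets of `ℝ^m`. -/
def BasicSA {m : ℕ} (A : Set (Fin m → ℝ)) : Prop :=
  ∃ (k l : ℕ) (g : Fin k → MvPolynomial (Fin m) ℝ) (h : Fin l → MvPolynomial (Fin m) ℝ),
    A = {x | (∀ i, eval x (g i) = 0) ∧ ∀ i, 0 < eval x (h i)}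

/-- Semialgebraic subsets of `ℝ^m`: finite unions of basic semialgebraic sets. -/
def IsSA {m : ℕ} (A : Set (Fin m → ℝ)) : Prop :=
  ∃ (N : ℕ) (B : Fin N → Set (Fin m → ℝ)), (∀ i, BasicSA (B i)) ∧ A = ⋃ i, B i

/-- A semialgebraic scalar function on a domain `D ⊆ ℝ` (graph is semialgebraic). -/
def IsSAFunOn (D : Set ℝ) (f : ℝ → ℝ) : Prop :=
  IsSA {z : Fin 2 → ℝ | z 0 ∈ D ∧ z 1 = f (z 0)}

/-- A semialgebraic curve `D → ℝⁿ` (graph is semialgebraic). -/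
def IsSACurve {n : ℕ} (D : Set ℝ) (φ : ℝ → Fin n → ℝ) : Prop :=
  IsSA {z : Fin (n + 1) → ℝ | z 0 ∈ D ∧ ∀ j : Fin n, z j.succ = φ (z 0) j}

/-- A semialgebraic map `ℝⁿ → ℝ^p` (graph is semialgebraic). -/
def IsSAMap {n p : ℕ} (F : (Fin n → ℝ) → (Fin p → ℝ)) : Prop :=
  IsSA {z : Fin (n + p) → ℝ |
    (fun i : Fin p => z (Fin.natAdd n i)) = F (fun j : Fin n => z (Fin.castAdd p j))}

/-!
Minimise `f₀` over `S ∩ {‖x‖ ≤ R}` for larger and larger `R`. As `f*` is not attained, the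
minimisers `x_k` tend to infinity while `f₀ x_k → f*`. Along an ultrafilter they look like a curve
`t ↦ (x*_j t ^ q_j)_j`, `t → 0⁺`: we have `x_k = x* exp τ_k`, where `τ_k` orders the exponents that
matter in the same way as `log t • q` does. This takes the place of the curve selection lemma, and
it makes each `f_i x_k`, divided by its dominant monomial, converge to `f_{i,Δ_i} x*`.

Suppose that `v` were a descent direction at `x*` for the face polynomials of `f₀` and of all active
constraints. Perturb `x_k` to `x_k exp (t w)` with `w = v / x* + C q`. By Euler's identity the term
`C q` changes the derivative of `f_{i,Δ_i}` by `C d(q, Γ(f_i)) f_{i,Δ_i}(x*)`. This is `0` for the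
active constraints, and for `f₀` if `d(q, Γ(f₀)) f_{0,Δ₀}(x*) = 0`; for `‖x‖²` it is a negative
multiple of `C`, because `‖x_k‖ → ∞`. So for large `C` the perturbation stays in `S` and decreases
both `‖x_k‖` and `f₀ x_k`, which is absurd.

If `d(q, Γ(f₀)) < 0`, then `f_{0,Δ₀}(x*) = 0` as `f₀ x_k` is bounded, and (MF)∞ provides such a `v`.
If `d(q, Γ(f₀)) > 0`, then `f* = 0`. If `d(q, Γ(f₀)) = 0`, then `f* = f_{0,Δ₀}(x*)`, and since there
is no such `v`, Gordan's alternative yields the multipliers.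
-/

open scoped Topology

section Ultralimits

variable {ι : Type*} (U : Ultrafilter ι)

lemma tendsto_nhds_or_atTop_or_atBot (a : ι → ℝ) :
    (∃ l, Tendsto a U (𝓝 l)) ∨ Tendsto a U atTop ∨ Tendsto a U atBot := by
  have hlim : Tendsto (fun k => (a k : EReal)) U (𝓝 (U.map fun k => (a k : EReal)).lim) :=
    (U.map fun k => (a k : EReal)).le_nhds_lim
  generalize (U.map fun k => (a k : EReal)).lim = L at hlim
  induction L with
  | coe l => exact .inl ⟨l, EReal.tendsto_coe.1 hlim⟩
  | top => exact .inr (.inl (EReal.tendsto_coe_nhds_top_iff.1 hlim))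
  | bot => exact .inr (.inr (EReal.tendsto_coe_nhds_bot_iff.1 hlim))

lemma exists_generalizedInverse {K E F : Type*} [DivisionRing K] [AddCommGroup E]
    [Module K E] [AddCommGroup F] [Module K F] (L : E →ₗ[K] F) :
    ∃ G : F →ₗ[K] E, L ∘ₗ G ∘ₗ L = L := by
  obtain ⟨g, hg⟩ := L.rangeRestrict.exists_rightInverse_of_surjective L.range_rangeRestrict
  obtain ⟨G, rfl⟩ := LinearMap.exists_extend g
  refine ⟨G, LinearMap.ext fun x => ?_⟩
  exact congrArg Subtype.val (LinearMap.congr_fun hg (L.rangeRestrict x))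

lemma exists_asymptotic_direction {α E : Type*} [Finite α] [AddCommGroup E] [Module ℝ E]
    (u : ι → E) (φ : α → E →ₗ[ℝ] ℝ) :
    ∃ q c : E, ∀ a,
      (φ a q = 0 ∧ Tendsto (fun k => φ a (u k - c)) U (𝓝 0)) ∨
      (0 < φ a q ∧ Tendsto (fun k => φ a (u k - c)) U atTop) ∨
      (φ a q < 0 ∧ Tendsto (fun k => φ a (u k - c)) U atBot) := by
  have := Fintype.ofFinite α
  choose l hl using fun a : {a // ∃ l, Tendsto (fun k => φ a (u k)) U (𝓝 l)} => a.2
  -- `L` collects the functionals that converge along `u`; subtracting from `u k` its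
  -- `L`-component kills these and changes the others only by a convergent term.
  let L := LinearMap.pi fun a : {a // ∃ l, Tendsto (fun k => φ a (u k)) U (𝓝 l)} => φ a
  obtain ⟨G, hG⟩ := exists_generalizedInverse L
  have hLu : Tendsto (fun k => L (u k)) U (𝓝 l) := tendsto_pi_nhds.2 hl
  have hGL (ψ : E →ₗ[ℝ] ℝ) : Tendsto (fun k => ψ (G (L (u k)))) U (𝓝 (ψ (G l))) :=
    ((ψ ∘ₗ G).continuous_of_finiteDimensional.tendsto l).comp hLu
  suffices ∀ a, ∀ᶠ k in (U : Filter ι),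
      (φ a (u k - G (L (u k))) = 0 ∧ Tendsto (fun k => φ a (u k - G l)) U (𝓝 0)) ∨
      (0 < φ a (u k - G (L (u k))) ∧ Tendsto (fun k => φ a (u k - G l)) U atTop) ∨
      (φ a (u k - G (L (u k))) < 0 ∧ Tendsto (fun k => φ a (u k - G l)) U atBot) by
    obtain ⟨k, hk⟩ := (eventually_all.2 this).exists
    exact ⟨_, _, hk⟩
  intro a
  simp only [map_sub]
  rcases tendsto_nhds_or_atTop_or_atBot U fun k => φ a (u k) with ha | ha | ha
  · have hbalance (k : ι) : φ a (G (L (u k))) = φ a (u k) :=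
      congrFun (LinearMap.congr_fun hG (u k)) ⟨a, ha⟩
    have hlim : Tendsto (fun k => φ a (u k)) U (𝓝 (φ a (G l))) := by
      simpa only [hbalance] using hGL (φ a)
    refine .of_forall fun k => .inl ⟨sub_eq_zero.2 (hbalance k).symm, ?_⟩
    simpa using hlim.sub_const (φ a (G l))
  · have hdiff : Tendsto (fun k => φ a (u k) - φ a (G (L (u k)))) U atTop := by
      simpa only [sub_eq_add_neg] using ha.atTop_add (hGL (φ a)).neg
    filter_upwards [hdiff.eventually_gt_atTop 0] with k hk
    exact .inr (.inl ⟨hk, tendsto_atTop_add_const_right _ (-φ a (G l)) ha⟩)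
  · have hdiff : Tendsto (fun k => φ a (u k) - φ a (G (L (u k)))) U atBot := by
      simpa only [sub_eq_add_neg] using ha.atBot_add (hGL (φ a)).neg
    filter_upwards [hdiff.eventually_lt_atBot 0] with k hk
    exact .inr (.inr ⟨hk, tendsto_atBot_add_const_right _ (-φ a (G l)) ha⟩)

end Ultralimits

section Gordan

lemma mem_convexHull_level_of_mem_convexHull {E : Type*} [AddCommGroup E] [Module ℝ E]
    (φ : E →ₗ[ℝ] ℝ) {s : Set E} {m : ℝ} (hm : ∀ y ∈ s, m ≤ φ y) {y : E}
    (hy : y ∈ convexHull ℝ s) (hφy : φ y = m) : y ∈ convexHull ℝ {z ∈ s | φ z = m} := by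
  have hconvex : Convex ℝ {z | m ≤ φ z ∧ (φ z = m → z ∈ convexHull ℝ {z ∈ s | φ z = m})} := by
    rintro z ⟨hz, hz'⟩ w ⟨hw, hw'⟩ a b ha hb hab
    obtain rfl : b = 1 - a := by linarith
    simp only [mem_ofPred_eq, map_add, map_smul, smul_eq_mul]
    refine ⟨by nlinarith, fun h => ?_⟩
    rcases ha.eq_or_lt with rfl | ha
    · simpa using hw' (by linarith)
    rcases hb.eq_or_lt with hb | hb
    · obtain rfl : a = 1 := by linarith
      simpa using hz' (by linarith)
    refine convex_convexHull ℝ _ (hz' ?_) (hw' ?_) ha.le hb.le hab <;> nlinarith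
  have hsub : s ⊆ {z | m ≤ φ z ∧ (φ z = m → z ∈ convexHull ℝ {z ∈ s | φ z = m})} :=
    fun z hz => ⟨hm z hz, fun h => subset_convexHull ℝ _ ⟨hz, h⟩⟩
  exact (convexHull_min hsub hconvex hy).2 hφy

variable {ι E : Type*} [Fintype ι]

/-- A nontrivial nonnegative linear relation among the vectors `a i`, `i ∈ A`. -/
structure IsGordanRelation [AddCommGroup E] [Module ℝ E] (A : Set ι) (a : ι → E)
    (lam : ι → ℝ) : Prop where
  nonneg : ∀ i, 0 ≤ lam i
  ne_zero : lam ≠ 0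
  eq_zero_of_notMem : ∀ i ∉ A, lam i = 0
  sum_smul : ∑ i, lam i • a i = 0

lemma exists_isGordanRelation_of_zero_mem_convexHull [AddCommGroup E] [Module ℝ E] {A : Set ι}
    {a : ι → E} (h0 : 0 ∈ convexHull ℝ (a '' A)) : ∃ lam, IsGordanRelation A a lam := by
  let basisVectors : Set (ι → ℝ) := (fun i => Pi.single i 1) '' A
  have himage : a '' A = Fintype.linearCombination ℝ a '' basisVectors := by
    simp [basisVectors, image_image]
  rw [himage, ← LinearMap.image_convexHull] at h0
  obtain ⟨lam, hlam, hsum⟩ := h0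
  have hsimplex : lam ∈ stdSimplex ℝ ι := by
    refine convexHull_min ?_ (convex_stdSimplex ℝ ι) hlam
    rintro _ ⟨i, -, rfl⟩
    exact single_mem_stdSimplex ℝ i
  have hoff : lam ∈ Submodule.pi Aᶜ fun _ => (⊥ : Submodule ℝ ℝ) := by
    refine convexHull_min ?_ (Submodule.convex _) hlam
    rintro _ ⟨i, hi, rfl⟩ j hj
    exact Pi.single_eq_of_ne (by rintro rfl; exact hj hi) 1
  refine ⟨lam, hsimplex.1, ?_, fun i hi => hoff i hi, hsum⟩
  rintro rfl
  simpa using hsimplex.2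

theorem exists_isGordanRelation_of_forall_dual [NormedAddCommGroup E] [NormedSpace ℝ E]
    {A : Set ι} {a : ι → E} (h : ∀ φ : E →L[ℝ] ℝ, ∃ i ∈ A, 0 ≤ φ (a i)) :
    ∃ lam, IsGordanRelation A a lam := by
  refine exists_isGordanRelation_of_zero_mem_convexHull ?_
  by_contra h0
  obtain ⟨φ, r, hr, hr0⟩ := geometric_hahn_banach_closed_point (convex_convexHull ℝ _)
    (((toFinite A).image a).isClosed_convexHull ℝ) h0
  obtain ⟨i, hiA, hi⟩ := h φ
  have := hr _ (subset_convexHull ℝ _ (mem_image_of_mem a hiA))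
  rw [map_zero] at hr0
  linarith

namespace IsGordanRelation

variable [AddCommGroup E] [Module ℝ E] {A : Set ι} {a : ι → E} {lam : ι → ℝ}

lemma smul (hlam : IsGordanRelation A a lam) {c : ℝ} (hc : 0 < c) :
    IsGordanRelation A a (c • lam) where
  nonneg i := mul_nonneg hc.le (hlam.nonneg i)
  ne_zero := smul_ne_zero hc.ne' hlam.ne_zero
  eq_zero_of_notMem i hi := by simp [hlam.eq_zero_of_notMem i hi]
  sum_smul := by simp [← smul_smul, ← Finset.smul_sum, hlam.sum_smul]

lemma pos_of_neg_on_rest (hlam : IsGordanRelation A a lam) {o : ι} {φ : E →ₗ[ℝ] ℝ}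
    (hφ : ∀ i ∈ A, i ≠ o → φ (a i) < 0) : 0 < lam o := by
  refine (hlam.nonneg o).lt_of_ne' fun ho => hlam.ne_zero (funext fun i => ?_)
  have hterm (i : ι) : lam i * φ (a i) ≤ 0 := by
    by_cases hi : i ∈ A ∧ i ≠ o
    · exact mul_nonpos_of_nonneg_of_nonpos (hlam.nonneg i) (hφ i hi.1 hi.2).le
    · have : lam i = 0 := by grind [hlam.eq_zero_of_notMem i]
      simp [this]
  have hsum : ∑ i, lam i * φ (a i) = 0 := by simpa using congrArg φ hlam.sum_smul
  have hi0 := (Finset.sum_eq_zero_iff_of_nonpos fun i _ => hterm i).1 hsum i (Finset.mem_univ i)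
  by_contra hi
  have hiA : i ∈ A := not_not.1 fun hiA => hi (hlam.eq_zero_of_notMem i hiA)
  exact (mul_ne_zero hi (hφ i hiA (by rintro rfl; exact hi ho)).ne) hi0

lemma exists_apply_eq_one (hlam : IsGordanRelation A a lam) {o : ι} {φ : E →ₗ[ℝ] ℝ}
    (hφ : ∀ i ∈ A, i ≠ o → φ (a i) < 0) :
    ∃ lam', IsGordanRelation A a lam' ∧ lam' o = 1 :=
  have ho := hlam.pos_of_neg_on_rest hφ
  ⟨_, hlam.smul (inv_pos.2 ho), inv_mul_cancel₀ ho.ne'⟩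

end IsGordanRelation

end Gordan

section ConstrainedMinimisers

variable {X : Type*} [TopologicalSpace X] {S : Set X} {f φ : X → ℝ}

lemma exists_isMinOn_sublevel_seq (hS : S.Nonempty) (hf : ContinuousOn f S)
    (hbdd : BddBelow (f '' S)) (hcompact : ∀ C, IsCompact (S ∩ {y | φ y ≤ C})) :
    ∃ x : ℕ → X, (∀ k, x k ∈ S ∧ IsMinOn f (S ∩ {y | φ y ≤ φ (x k)}) (x k)) ∧
      Tendsto (fun k => f (x k)) atTop (𝓝 (sInf (f '' S))) := by
  obtain ⟨v, -, hv, hvS⟩ := exists_seq_tendsto_sInf (hS.image f) hbdd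
  choose y hyS hyv using hvS
  have hmin (k : ℕ) := (hcompact (φ (y k))).exists_isMinOn ⟨y k, hyS k, le_refl (φ (y k))⟩
    (hf.mono inter_subset_left)
  choose x hx hxmin using hmin
  refine ⟨x, fun k => ⟨(hx k).1, (hxmin k).on_subset ?_⟩, ?_⟩
  · exact inter_subset_inter_right S fun z (hz : φ z ≤ φ (x k)) => hz.trans (hx k).2
  · refine tendsto_of_tendsto_of_tendsto_of_le_of_le tendsto_const_nhds hv
      (fun k => csInf_le hbdd (mem_image_of_mem f (hx k).1)) fun k => ?_
    exact (hxmin k ⟨hyS k, le_refl (φ (y k))⟩).trans (hyv k).le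

lemma tendsto_atTop_of_tendsto_of_forall_ne {ι : Type*} {U : Ultrafilter ι} {x : ι → X} {m : ℝ}
    (hf : ContinuousOn f S) (hcompact : ∀ C, IsCompact (S ∩ {y | φ y ≤ C}))
    (hxS : ∀ k, x k ∈ S) (hfx : Tendsto (fun k => f (x k)) U (𝓝 m)) (hne : ∀ y ∈ S, f y ≠ m) :
    Tendsto (fun k => φ (x k)) U atTop := by
  refine tendsto_atTop.2 fun C => ?_
  by_contra hC
  have hmem : ∀ᶠ k in (U : Filter ι), x k ∈ S ∩ {y | φ y ≤ C} :=
    (Ultrafilter.eventually_not.2 hC).mono fun k hk => ⟨hxS k, (not_le.1 hk).le⟩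
  obtain ⟨y, hy, hlim⟩ := (hcompact C).ultrafilter_le_nhds (U.map x) (le_principal_iff.2 hmem)
  have hlimS : Tendsto x U (𝓝[S] y) :=
    tendsto_nhdsWithin_iff.2 ⟨hlim, .of_forall hxS⟩
  exact hne y hy.1 (tendsto_nhds_unique ((hf y hy.1).tendsto.comp hlimS) hfx)

end ConstrainedMinimisers

section Monomials

variable {n : ℕ} {J : Set (Fin n)} {x : Fin n → ℝ}

lemma expVec_zero : expVec (0 : Fin n →₀ ℕ) = 0 := by
  ext
  simp [expVec]

lemma eval_eq_sum_eval_monomial {g : MvPolynomial (Fin n) ℝ} {s : Finset (Fin n →₀ ℕ)}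
    (hs : g.support ⊆ s) (x : Fin n → ℝ) :
    eval x g = ∑ κ ∈ s, eval x (monomial κ (g.coeff κ)) := by
  rw [← Finset.sum_subset hs fun κ _ hκ => by simp [notMem_support_iff.1 hκ], ← map_sum,
    support_sum_monomial_coeff]

lemma eval_monomial_eq_zero {κ : Fin n →₀ ℕ} (hx : x ∈ RJ J) (hκ : expVec κ ∉ RJ J) (c : ℝ) :
    eval x (monomial κ c) = 0 := by
  obtain ⟨j, hj, hκj⟩ : ∃ j ∉ J, expVec κ j ≠ 0 := by simpa [RJ] using hκ
  have hκj' : κ j ≠ 0 := by simpa [expVec] using hκj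
  rw [eval_monomial, Finsupp.prod_fintype _ _ (by simp),
    Finset.prod_eq_zero (Finset.mem_univ j) (by rw [hx j hj, zero_pow hκj']), mul_zero]

lemma NotConstOn.exists_expVec_mem_RJ {h : MvPolynomial (Fin n) ℝ} (hJ : NotConstOn h J) :
    ∃ κ ∈ h.support, expVec κ ∈ RJ J := by
  by_contra! hnone
  have hzero (x : Fin n → ℝ) (hx : x ∈ RJ J) : eval x h = 0 := by
    rw [eval_eq_sum_eval_monomial Subset.rfl x]
    exact Finset.sum_eq_zero fun κ hκ => eval_monomial_eq_zero hx (hnone κ hκ) _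
  obtain ⟨x, hx, y, hy, hxy⟩ := hJ
  exact hxy ((hzero x hx).trans (hzero y hy).symm)

lemma mem_RJ_support (x : Fin n → ℝ) : x ∈ RJ (Function.support x) :=
  fun _ => Function.notMem_support.1

lemma convex_RJ (J : Set (Fin n)) : Convex ℝ (RJ J) := by
  intro y hy z hz a b _ _ _ j hj
  simp [hy j hj, hz j hj]

end Monomials

section NewtonFaces

variable {n : ℕ} {J : Set (Fin n)}

lemma isLeast_newtonD {h : MvPolynomial (Fin n) ℝ} (hh : h.support.Nonempty) (q : Fin n → ℝ) :
    IsLeast ((fun κ => q ⬝ᵥ expVec κ) '' h.support) (NewtonD h q) := by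
  obtain ⟨κ₀, hκ₀, hmin⟩ := h.support.exists_min_image (fun κ => q ⬝ᵥ expVec κ) hh
  have hleast : IsLeast ((fun κ => q ⬝ᵥ expVec κ) '' h.support) (q ⬝ᵥ expVec κ₀) :=
    ⟨mem_image_of_mem _ hκ₀, forall_mem_image.2 hmin⟩
  suffices NewtonD h q = q ⬝ᵥ expVec κ₀ from this ▸ hleast
  refine IsLeast.csInf_eq ⟨mem_image_of_mem _ (subset_convexHull ℝ _ (mem_image_of_mem _ hκ₀)), ?_⟩
  have hhalf : Convex ℝ {y | q ⬝ᵥ expVec κ₀ ≤ q ⬝ᵥ y} :=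
    convex_halfSpace_ge (dotProductBilin ℝ ℝ q).isLinear _
  have hsub : expVec '' h.support ⊆ {y | q ⬝ᵥ expVec κ₀ ≤ q ⬝ᵥ y} := forall_mem_image.2 hmin
  exact forall_mem_image.2 fun y hy => convexHull_min hsub hhalf hy

/-- `κ = 0` takes care of `h = 0`, for which `NewtonD h q = sInf ∅ = 0`. -/
lemma exists_dotProduct_expVec_eq_newtonD (h : MvPolynomial (Fin n) ℝ) (q : Fin n → ℝ) :
    ∃ κ ∈ insert 0 h.support, q ⬝ᵥ expVec κ = NewtonD h q := by
  rcases h.support.eq_empty_or_nonempty with hempty | hne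
  · refine ⟨0, Finset.mem_insert_self _ _, ?_⟩
    simp [NewtonD, NewtonPolyhedron, hempty, dotProduct, expVec]
  · obtain ⟨κ, hκ, hD⟩ := (isLeast_newtonD hne q).1
    exact ⟨κ, Finset.mem_insert_of_mem hκ, hD⟩

lemma newtonD_le {h : MvPolynomial (Fin n) ℝ} {κ : Fin n →₀ ℕ} (hκ : κ ∈ h.support)
    (q : Fin n → ℝ) : NewtonD h q ≤ q ⬝ᵥ expVec κ :=
  (isLeast_newtonD ⟨κ, hκ⟩ q).2 (mem_image_of_mem _ hκ)

lemma expVec_mem_newtonFace_iff {h : MvPolynomial (Fin n) ℝ} {κ : Fin n →₀ ℕ}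
    (hκ : κ ∈ h.support) {q : Fin n → ℝ} :
    expVec κ ∈ NewtonFace h q ↔ q ⬝ᵥ expVec κ = NewtonD h q :=
  and_iff_right (subset_convexHull ℝ _ (mem_image_of_mem _ hκ))

lemma newtonFace_subset_RJ {h : MvPolynomial (Fin n) ℝ} {q : Fin n → ℝ}
    (hq : ∀ κ ∈ h.support, q ⬝ᵥ expVec κ = NewtonD h q → expVec κ ∈ RJ J) :
    NewtonFace h q ⊆ RJ J := by
  rintro y ⟨hy, hyD⟩
  have hface := mem_convexHull_level_of_mem_convexHull (dotProductBilin ℝ ℝ q)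
    (forall_mem_image.2 fun κ hκ => newtonD_le hκ q) hy hyD
  refine convexHull_min ?_ (convex_RJ J) hface
  rintro _ ⟨⟨κ, hκ, rfl⟩, hκD⟩
  exact hq κ hκ hκD

lemma coeff_facePoly (h : MvPolynomial (Fin n) ℝ) (Δ : Set (Fin n → ℝ)) (κ : Fin n →₀ ℕ) :
    (facePoly h Δ).coeff κ = if expVec κ ∈ Δ then h.coeff κ else 0 := by
  simp only [facePoly, coeff_sum, coeff_monomial, Finset.sum_ite_eq', Finset.mem_filter,
    mem_support_iff]
  grind

lemma pderiv_facePoly_eq_zero (h : MvPolynomial (Fin n) ℝ) {Δ : Set (Fin n → ℝ)} (hΔ : Δ ⊆ RJ J)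
    {j : Fin n} (hj : j ∉ J) : pderiv j (facePoly h Δ) = 0 := by
  rw [facePoly, map_sum]
  refine Finset.sum_eq_zero fun κ hκ => ?_
  have hκj : κ j = 0 := by simpa [expVec] using hΔ (Finset.mem_filter.1 hκ).2 j hj
  simp [pderiv_monomial, hκj]

/-- The face polynomial `f_Δ` of the face `Δ = Δ(q, Γ(f))` cut out by the weight `q`. -/
abbrev initialForm (h : MvPolynomial (Fin n) ℝ) (q : Fin n → ℝ) : MvPolynomial (Fin n) ℝ :=
  facePoly h (NewtonFace h q)

end NewtonFaces

section EulerDerivative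

variable {n : ℕ}

/-- The gradient of the polynomial `h` at `x`. -/
def gradAt (h : MvPolynomial (Fin n) ℝ) (x : Fin n → ℝ) : Fin n → ℝ :=
  fun j => eval x (pderiv j h)

/-- The multiplicative perturbation of `x` by `exp τ`; it keeps the zero coordinates of `x`. -/
def rescale (τ x : Fin n → ℝ) : Fin n → ℝ := fun j => x j * Real.exp (τ j)

/-- The logarithmic derivative `∑ j, w j • x j ∂/∂x j`, i.e. the derivative of
`t ↦ h (rescale (t • w) x)` at `t = 0`. -/
def eulerDeriv (w : Fin n → ℝ) (h : MvPolynomial (Fin n) ℝ) : MvPolynomial (Fin n) ℝ :=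
  ∑ j, w j • (X j * pderiv j h)

lemma coeff_X_mul_pderiv (j : Fin n) (h : MvPolynomial (Fin n) ℝ) (κ : Fin n →₀ ℕ) :
    (X j * pderiv j h).coeff κ = κ j * h.coeff κ := by
  induction h using MvPolynomial.induction_on' with
  | monomial m r =>
    rw [X_mul_pderiv_monomial, coeff_smul, coeff_monomial]
    split_ifs with hm
    · simp [hm]
    · simp
  | add p q hp hq => simp only [map_add, mul_add, coeff_add, hp, hq]

lemma coeff_eulerDeriv (w : Fin n → ℝ) (h : MvPolynomial (Fin n) ℝ) (κ : Fin n →₀ ℕ) :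
    (eulerDeriv w h).coeff κ = (w ⬝ᵥ expVec κ) * h.coeff κ := by
  simp only [eulerDeriv, coeff_sum, coeff_smul, coeff_X_mul_pderiv, smul_eq_mul, dotProduct,
    expVec, Finset.sum_mul, mul_assoc]

lemma support_eulerDeriv_subset (w : Fin n → ℝ) (h : MvPolynomial (Fin n) ℝ) :
    (eulerDeriv w h).support ⊆ h.support := by
  intro κ hκ
  rw [mem_support_iff, coeff_eulerDeriv] at hκ
  exact mem_support_iff.2 (right_ne_zero_of_mul hκ)

lemma facePoly_eulerDeriv (w : Fin n → ℝ) (h : MvPolynomial (Fin n) ℝ) (Δ : Set (Fin n → ℝ)) :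
    facePoly (eulerDeriv w h) Δ = eulerDeriv w (facePoly h Δ) := by
  ext κ
  simp only [coeff_facePoly, coeff_eulerDeriv, mul_ite, mul_zero]

lemma eval_eulerDeriv (w : Fin n → ℝ) (h : MvPolynomial (Fin n) ℝ) (x : Fin n → ℝ) :
    eval x (eulerDeriv w h) = gradAt h x ⬝ᵥ (w * x) := by
  simp only [eulerDeriv, map_sum, smul_eval, map_mul, eval_X, gradAt, dotProduct, Pi.mul_apply]
  exact Finset.sum_congr rfl fun j _ => by ring

lemma eulerDeriv_initialForm (q : Fin n → ℝ) (h : MvPolynomial (Fin n) ℝ) :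
    eulerDeriv q (initialForm h q) = NewtonD h q • initialForm h q := by
  ext κ
  rw [coeff_eulerDeriv, coeff_smul, smul_eq_mul, coeff_facePoly]
  split_ifs with hκ
  · rw [← hκ.2]; rfl
  · simp only [mul_zero]

/-- Division by a zero coordinate of `x` is harmless: the corresponding partial derivative
vanishes. -/
lemma eval_eulerDeriv_div_add_smul {x q : Fin n → ℝ} {h : MvPolynomial (Fin n) ℝ}
    (hΔ : NewtonFace h q ⊆ RJ (Function.support x)) (v : Fin n → ℝ) (C : ℝ) :
    eval x (eulerDeriv (v / x + C • q) (initialForm h q)) =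
      gradAt (initialForm h q) x ⬝ᵥ v + C * (NewtonD h q * eval x (initialForm h q)) := by
  have hv : gradAt (initialForm h q) x ⬝ᵥ (v / x * x) = gradAt (initialForm h q) x ⬝ᵥ v := by
    refine Finset.sum_congr rfl fun j _ => ?_
    by_cases hj : x j = 0
    · simp [gradAt, pderiv_facePoly_eq_zero h hΔ (Function.notMem_support.2 hj)]
    · simp [div_mul_cancel₀ _ hj]
  have hq : gradAt (initialForm h q) x ⬝ᵥ (q * x) = NewtonD h q * eval x (initialForm h q) := by
    rw [← eval_eulerDeriv, eulerDeriv_initialForm, smul_eval]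
  rw [eval_eulerDeriv, add_mul, dotProduct_add, hv, smul_mul_assoc, dotProduct_smul, hq,
    smul_eq_mul]

lemma eval_monomial_rescale (τ x : Fin n → ℝ) (κ : Fin n →₀ ℕ) (c : ℝ) :
    eval (rescale τ x) (monomial κ c) = eval x (monomial κ c) * Real.exp (τ ⬝ᵥ expVec κ) := by
  have hprod (y : Fin n → ℝ) : (κ.prod fun j e => y j ^ e) = ∏ j, y j ^ κ j :=
    Finsupp.prod_fintype _ _ fun _ => pow_zero _
  have hexp : Real.exp (τ ⬝ᵥ expVec κ) = ∏ j, Real.exp (τ j) ^ κ j := by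
    simp only [dotProduct, expVec, Real.exp_sum, mul_comm (τ _), Real.exp_nat_mul]
  rw [eval_monomial, eval_monomial, hprod, hprod, hexp]
  simp only [rescale, mul_pow, Finset.prod_mul_distrib, mul_assoc]

lemma eval_rescale (τ x : Fin n → ℝ) {g : MvPolynomial (Fin n) ℝ} {s : Finset (Fin n →₀ ℕ)}
    (hs : g.support ⊆ s) : eval (rescale τ x) g =
      ∑ κ ∈ s, eval x (monomial κ (g.coeff κ)) * Real.exp (τ ⬝ᵥ expVec κ) := by
  simp only [← eval_monomial_rescale]
  exact eval_eq_sum_eval_monomial hs _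

lemma hasDerivAt_eval_rescale (w x : Fin n → ℝ) (h : MvPolynomial (Fin n) ℝ) :
    HasDerivAt (fun t : ℝ => eval (rescale (t • w) x) h) (eval x (eulerDeriv w h)) 0 := by
  rw [eval_eq_sum_eval_monomial (support_eulerDeriv_subset w h) x]
  simp only [eval_rescale _ x Subset.rfl, smul_dotProduct, smul_eq_mul]
  refine HasDerivAt.fun_sum fun κ _ => ?_
  have hexp := (((hasDerivAt_id (0 : ℝ)).mul_const (w ⬝ᵥ expVec κ)).exp).const_mul
    (eval x (monomial κ (h.coeff κ)))
  refine hexp.congr_deriv ?_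
  simp only [coeff_eulerDeriv, eval_monomial, id, zero_mul, Real.exp_zero]
  ring

lemma rescale_zero_smul (w x : Fin n → ℝ) : rescale ((0 : ℝ) • w) x = x := by
  funext j
  simp [rescale]

lemma rescale_mem_RJ {J : Set (Fin n)} {x : Fin n → ℝ} (hx : x ∈ RJ J) (τ : Fin n → ℝ) :
    rescale τ x ∈ RJ J := fun j hj => by simp [rescale, hx j hj]

lemma eventually_lt_of_hasDerivAt_neg {g : ℝ → ℝ} {g' a : ℝ} (hg : HasDerivAt g g' a)
    (hg' : g' < 0) : ∀ᶠ t in 𝓝[>] a, g t < g a := by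
  have hslope := (hasDerivAt_iff_tendsto_slope.1 hg).mono_left (nhdsGT_le_nhdsNE a)
  filter_upwards [hslope.eventually_lt_const hg', self_mem_nhdsWithin] with t ht hat
  rw [slope_def_field, div_lt_iff₀ (sub_pos.2 hat), zero_mul] at ht
  exact sub_neg.1 ht

lemma eventually_eval_rescale_lt {w x : Fin n → ℝ} {h : MvPolynomial (Fin n) ℝ}
    (hneg : eval x (eulerDeriv w h) < 0) :
    ∀ᶠ t in 𝓝[>] (0 : ℝ), eval (rescale (t • w) x) h < eval x h := by
  simpa only [rescale_zero_smul] using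
    eventually_lt_of_hasDerivAt_neg (hasDerivAt_eval_rescale w x h) hneg

lemma eventually_eval_rescale_neg (w : Fin n → ℝ) {x : Fin n → ℝ} {h : MvPolynomial (Fin n) ℝ}
    (hneg : eval x h < 0) : ∀ᶠ t in 𝓝[>] (0 : ℝ), eval (rescale (t • w) x) h < 0 := by
  have hcont := (hasDerivAt_eval_rescale w x h).continuousAt.tendsto
  rw [rescale_zero_smul] at hcont
  exact nhdsWithin_le_nhds (hcont.eventually_lt_const hneg)

end EulerDerivative

section TropicalLimits

variable {ι : Type*} {n : ℕ}

/-- `IsTropicalLimit U x τ q xs F` is the substitute for the Puiseux expansion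
`x j = xs j * t ^ q j + …`, `t → 0⁺`, of a curve: `x k = xs * exp (τ k)`, where `τ k` behaves on
the exponents in `F` like `log t • q`. By `separated`, the vanishing coordinates of `xs`
behave as if their weight were `+∞`. -/
structure IsTropicalLimit (U : Filter ι) (x τ : ι → Fin n → ℝ) (q xs : Fin n → ℝ)
    (F : Finset (Fin n →₀ ℕ)) : Prop where
  eventually_eq : ∀ᶠ k in U, x k = rescale (τ k) xs
  tendsto_zero : ∀ κ ∈ F, ∀ κ' ∈ F, q ⬝ᵥ expVec κ = q ⬝ᵥ expVec κ' →
    Tendsto (fun k => τ k ⬝ᵥ expVec κ - τ k ⬝ᵥ expVec κ') U (𝓝 0)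
  tendsto_atBot : ∀ κ ∈ F, ∀ κ' ∈ F, q ⬝ᵥ expVec κ' < q ⬝ᵥ expVec κ →
    Tendsto (fun k => τ k ⬝ᵥ expVec κ - τ k ⬝ᵥ expVec κ') U atBot
  separated : ∀ κ ∈ F, ∀ κ' ∈ F, expVec κ ∉ RJ (Function.support xs) →
    expVec κ' ∈ RJ (Function.support xs) → q ⬝ᵥ expVec κ' < q ⬝ᵥ expVec κ

/-- The coordinatewise logarithm of `|x|`, where a zero coordinate counts as so small that it
beats every product of powers of the other coordinates with exponents at most `r`. -/
def logSize (r : ℝ) (x : Fin n → ℝ) : Fin n → ℝ :=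
  fun j => if x j = 0 then -(r * (1 + ∑ i, |Real.log (x i)|)) else Real.log (x j)

lemma sign_mul_exp_logSize (r : ℝ) (x : Fin n → ℝ) (j : Fin n) :
    (SignType.sign (x j) : ℝ) * Real.exp (logSize r x j) = x j := by
  by_cases hj : x j = 0
  · simp [hj]
  · rw [logSize, if_neg hj, Real.exp_log_eq_abs hj, sign_mul_abs]

lemma logSize_dotProduct_le {r : ℝ} {x δ : Fin n → ℝ} {j : Fin n} (hδ : ∀ i, |δ i| ≤ r)
    (hpos : ∀ i, x i = 0 → 0 ≤ δ i) (hj : x j = 0) (hδj : 1 ≤ δ j) :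
    logSize r x ⬝ᵥ δ ≤ -r := by
  set L := ∑ i, |Real.log (x i)|
  have hL : 0 ≤ L := Finset.sum_nonneg fun i _ => abs_nonneg _
  have hr : 0 ≤ r := (abs_nonneg _).trans (hδ j)
  have hterm (i : Fin n) :
      logSize r x i * δ i ≤ r * |Real.log (x i)| - if i = j then r * (1 + L) else 0 := by
    have hscale : 0 ≤ r * (1 + L) := mul_nonneg hr (add_nonneg zero_le_one hL)
    by_cases hi : x i = 0
    · have : logSize r x i = -(r * (1 + L)) := if_pos hi
      rw [this, hi, Real.log_zero, abs_zero, mul_zero]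
      split_ifs with hij
      · subst hij; nlinarith
      · nlinarith [mul_nonneg hscale (hpos i hi)]
    · have hij : i ≠ j := by rintro rfl; exact hi hj
      rw [logSize, if_neg hi, if_neg hij, sub_zero, mul_comm r]
      exact (le_abs_self _).trans (abs_mul (Real.log (x i)) (δ i) ▸
        mul_le_mul_of_nonneg_left (hδ i) (abs_nonneg _))
  calc logSize r x ⬝ᵥ δ
      ≤ ∑ i, (r * |Real.log (x i)| - if i = j then r * (1 + L) else 0) :=
        Finset.sum_le_sum fun i _ => hterm i
    _ = r * L - r * (1 + L) := by
        simp only [Finset.sum_sub_distrib, ← Finset.mul_sum, Finset.sum_ite_eq',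
          Finset.mem_univ, if_true, L]
    _ = -r := by ring

lemma tendsto_logSize_dotProduct_atBot {U : Filter ι} {r : ι → ℝ} (hr : Tendsto r U atTop)
    {x : ι → Fin n → ℝ} {J : Set (Fin n)} (hx : ∀ᶠ k in U, Function.support (x k) = J)
    {κ κ' : Fin n →₀ ℕ} (hκ : expVec κ ∉ RJ J) (hκ' : expVec κ' ∈ RJ J) :
    Tendsto (fun k => logSize (r k) (x k) ⬝ᵥ (expVec κ - expVec κ')) U atBot := by
  obtain ⟨j, hj, hκj⟩ : ∃ j ∉ J, expVec κ j ≠ 0 := by simpa [RJ] using hκ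
  have hκj' : 1 ≤ expVec κ j :=
    Nat.one_le_cast.2 (Nat.one_le_iff_ne_zero.2 fun h => hκj (by simp [expVec, h]))
  have hbig (i : Fin n) := hr.eventually_ge_atTop |(expVec κ - expVec κ') i|
  refine tendsto_atBot_mono' U ?_ (tendsto_neg_atTop_atBot.comp hr)
  filter_upwards [hx, eventually_all.2 hbig] with k hxk hk
  have hzero (i : Fin n) : x k i = 0 ↔ i ∉ J := by rw [← hxk, Function.notMem_support]
  refine logSize_dotProduct_le hk (fun i hi => ?_) ((hzero j).2 hj) ?_
  · rw [Pi.sub_apply, hκ' i ((hzero i).1 hi), sub_zero]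
    exact Nat.cast_nonneg _
  · simpa [hκ' j hj] using hκj'

lemma exists_eventually_sign_eq (U : Ultrafilter ι) (x : ι → Fin n → ℝ) :
    ∃ s : Fin n → SignType, ∀ᶠ k in (U : Filter ι), ∀ j, SignType.sign (x k j) = s j := by
  have hfun : ∃ s : Fin n → SignType, ∀ᶠ k in (U : Filter ι),
      (fun j => SignType.sign (x k j)) = s :=
    Ultrafilter.eventually_exists_iff.1 (.of_forall fun k => ⟨_, rfl⟩)
  simpa only [funext_iff] using hfun

lemma support_rescale (τ x : Fin n → ℝ) :
    Function.support (rescale τ x) = Function.support x := by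
  ext j
  simp [rescale, Real.exp_ne_zero]

theorem exists_isTropicalLimit (U : Ultrafilter ι) {r : ι → ℝ} (hr : Tendsto r U atTop)
    (x : ι → Fin n → ℝ) (F : Finset (Fin n →₀ ℕ)) :
    ∃ τ q xs, IsTropicalLimit U x τ q xs F := by
  obtain ⟨s, hs⟩ := exists_eventually_sign_eq U x
  set u : ι → Fin n → ℝ := fun k => logSize (r k) (x k)
  obtain ⟨q, c, hqc⟩ := exists_asymptotic_direction U u
    fun κ : F × F => (dotProductBilin ℝ ℝ).flip (expVec κ.1 - expVec κ.2)
  simp only [LinearMap.flip_apply, dotProductBilin_apply_apply, dotProduct_sub] at hqc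
  set xs : Fin n → ℝ := fun j => s j * Real.exp (c j)
  have hx : ∀ᶠ k in (U : Filter ι), x k = rescale (u k - c) xs := by
    filter_upwards [hs] with k hk
    funext j
    rw [rescale, Pi.sub_apply, mul_assoc, ← Real.exp_add, add_sub_cancel, ← hk j,
      sign_mul_exp_logSize]
  have hsupp : ∀ᶠ k in (U : Filter ι), Function.support (x k) = Function.support xs :=
    hx.mono fun k hk => hk ▸ support_rescale _ _
  refine ⟨fun k => u k - c, -q, xs, hx, fun κ hκ κ' hκ' h => ?_, fun κ hκ κ' hκ' h => ?_,
    fun κ hκ κ' hκ' hκJ hκJ' => ?_⟩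
  all_goals
    have htrichotomy := hqc (⟨κ, hκ⟩, ⟨κ', hκ'⟩)
    simp only [neg_dotProduct] at *
  · rcases htrichotomy with ⟨-, hlim⟩ | ⟨hq, -⟩ | ⟨hq, -⟩
    · exact hlim
    all_goals linarith
  · rcases htrichotomy with ⟨hq, -⟩ | ⟨hq, -⟩ | ⟨-, hlim⟩
    · linarith
    · linarith
    · exact hlim
  · have hbot : Tendsto (fun k => (u k - c) ⬝ᵥ expVec κ - (u k - c) ⬝ᵥ expVec κ') U atBot := by
      refine (tendsto_atBot_add_const_right _ (-(c ⬝ᵥ (expVec κ - expVec κ')))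
        (tendsto_logSize_dotProduct_atBot hr hsupp hκJ hκJ')).congr fun k => ?_
      simp only [u, sub_dotProduct, dotProduct_sub]
      ring
    rcases htrichotomy with ⟨-, hlim⟩ | ⟨-, hlim⟩ | ⟨hq, -⟩
    · exact absurd hlim (not_tendsto_nhds_of_tendsto_atBot hbot 0)
    · exact absurd hlim (hbot.not_tendsto disjoint_atBot_atTop)
    · linarith

end TropicalLimits

section InitialFormLimits

variable {ι : Type*} {n : ℕ} {U : Filter ι} {x τ : ι → Fin n → ℝ} {q xs : Fin n → ℝ}
  {F : Finset (Fin n →₀ ℕ)} {g h : MvPolynomial (Fin n) ℝ}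

namespace IsTropicalLimit

lemma eventually_mem_RJ (hx : IsTropicalLimit U x τ q xs F) :
    ∀ᶠ k in U, x k ∈ RJ (Function.support xs) :=
  hx.eventually_eq.mono fun _ hk => hk ▸ rescale_mem_RJ (mem_RJ_support xs) _

lemma newtonFace_subset_RJ (hx : IsTropicalLimit U x τ q xs F) (hF : h.support ⊆ F)
    (hJ : NotConstOn h (Function.support xs)) : NewtonFace h q ⊆ RJ (Function.support xs) := by
  obtain ⟨κ', hκ', hκJ'⟩ := hJ.exists_expVec_mem_RJ
  refine _root_.newtonFace_subset_RJ fun κ hκ hκD => ?_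
  by_contra hκJ
  exact (hx.separated κ (hF hκ) κ' (hF hκ') hκJ hκJ').not_ge (hκD ▸ newtonD_le hκ' q)

lemma tendsto_eval_div_exp (hx : IsTropicalLimit U x τ q xs F) (hF : h.support ⊆ F)
    (hg : g.support ⊆ h.support) {κ₀ : Fin n →₀ ℕ} (hκ₀ : κ₀ ∈ F)
    (hD : q ⬝ᵥ expVec κ₀ = NewtonD h q) :
    Tendsto (fun k => eval (x k) g / Real.exp (τ k ⬝ᵥ expVec κ₀)) U
      (𝓝 (eval xs (facePoly g (NewtonFace h q)))) := by
  have hterm : ∀ κ ∈ h.support, Tendsto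
      (fun k => eval xs (monomial κ (g.coeff κ)) *
        Real.exp (τ k ⬝ᵥ expVec κ - τ k ⬝ᵥ expVec κ₀)) U
      (𝓝 (eval xs (monomial κ ((facePoly g (NewtonFace h q)).coeff κ)))) := by
    intro κ hκ
    rw [coeff_facePoly, expVec_mem_newtonFace_iff hκ]
    split_ifs with hκD
    · have hexp := (hx.tendsto_zero κ (hF hκ) κ₀ hκ₀ (hκD.trans hD.symm)).rexp
      simpa using hexp.const_mul (eval xs (monomial κ (g.coeff κ)))
    · have hlt : q ⬝ᵥ expVec κ₀ < q ⬝ᵥ expVec κ :=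
        hD ▸ (newtonD_le hκ q).lt_of_ne' hκD
      have hexp := Real.tendsto_exp_atBot.comp (hx.tendsto_atBot κ (hF hκ) κ₀ hκ₀ hlt)
      simpa using hexp.const_mul (eval xs (monomial κ (g.coeff κ)))
  have hsupp : (facePoly g (NewtonFace h q)).support ⊆ h.support := fun κ hκ => hg <| by
    rw [mem_support_iff, coeff_facePoly] at hκ
    exact mem_support_iff.2 fun h0 => hκ (by simp [h0])
  rw [eval_eq_sum_eval_monomial hsupp xs]
  refine (tendsto_finsetSum _ hterm).congr' ?_
  filter_upwards [hx.eventually_eq] with k hk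
  simp only [hk, eval_rescale _ _ hg, Finset.sum_div, Real.exp_sub, mul_div_assoc]

lemma eventually_eval_neg (hx : IsTropicalLimit U x τ q xs F) (hF : insert 0 h.support ⊆ F)
    (hg : g.support ⊆ h.support) (hneg : eval xs (facePoly g (NewtonFace h q)) < 0) :
    ∀ᶠ k in U, eval (x k) g < 0 := by
  obtain ⟨κ₀, hκ₀, hD⟩ := exists_dotProduct_expVec_eq_newtonD h q
  have hlim := hx.tendsto_eval_div_exp ((Finset.subset_insert _ _).trans hF) hg (hF hκ₀) hD
  filter_upwards [hlim.eventually_lt_const hneg] with k hk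
  rwa [div_lt_iff₀ (Real.exp_pos _), zero_mul] at hk

lemma eventually_eval_eulerDeriv_neg (hx : IsTropicalLimit U x τ q xs F)
    (hF : insert 0 h.support ⊆ F) {w : Fin n → ℝ}
    (hneg : eval xs (eulerDeriv w (initialForm h q)) < 0) :
    ∀ᶠ k in U, eval (x k) (eulerDeriv w h) < 0 :=
  hx.eventually_eval_neg hF (support_eulerDeriv_subset w h) (by rwa [facePoly_eulerDeriv])

lemma eval_initialForm_nonpos [U.NeBot] (hx : IsTropicalLimit U x τ q xs F)
    (hF : insert 0 h.support ⊆ F) (hle : ∀ᶠ k in U, eval (x k) h ≤ 0) :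
    eval xs (initialForm h q) ≤ 0 := by
  obtain ⟨κ₀, hκ₀, hD⟩ := exists_dotProduct_expVec_eq_newtonD h q
  exact le_of_tendsto (hx.tendsto_eval_div_exp ((Finset.subset_insert _ _).trans hF) Subset.rfl
    (hF hκ₀) hD) (hle.mono fun k hk => div_nonpos_of_nonpos_of_nonneg hk (Real.exp_pos _).le)

lemma tendsto_eval_of_newtonD_eq_zero (hx : IsTropicalLimit U x τ q xs F)
    (hF : insert 0 h.support ⊆ F) (hD : NewtonD h q = 0) :
    Tendsto (fun k => eval (x k) h) U (𝓝 (eval xs (initialForm h q))) := by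
  have hlim := hx.tendsto_eval_div_exp ((Finset.subset_insert _ _).trans hF) Subset.rfl
    (hF (Finset.mem_insert_self _ _)) (by rw [expVec_zero, dotProduct_zero, hD])
  simpa only [expVec_zero, dotProduct_zero, Real.exp_zero, div_one] using hlim

lemma tendsto_eval_of_newtonD_pos (hx : IsTropicalLimit U x τ q xs F)
    (hF : insert 0 h.support ⊆ F) (hD : 0 < NewtonD h q) :
    Tendsto (fun k => eval (x k) h) U (𝓝 0) := by
  obtain ⟨κ₀, hκ₀, hκ₀D⟩ := exists_dotProduct_expVec_eq_newtonD h q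
  have hquot := hx.tendsto_eval_div_exp ((Finset.subset_insert _ _).trans hF) Subset.rfl
    (hF hκ₀) hκ₀D
  have hbot := hx.tendsto_atBot κ₀ (hF hκ₀) 0 (hF (Finset.mem_insert_self _ _))
    (by rwa [expVec_zero, dotProduct_zero, hκ₀D])
  simp only [expVec_zero, dotProduct_zero, sub_zero] at hbot
  simpa only [mul_zero, Function.comp_apply, div_mul_cancel₀ _ (Real.exp_ne_zero _)] using
    hquot.mul (Real.tendsto_exp_atBot.comp hbot)

lemma eval_initialForm_eq_zero_of_newtonD_neg [U.NeBot] (hx : IsTropicalLimit U x τ q xs F)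
    (hF : insert 0 h.support ⊆ F) (hD : NewtonD h q < 0) {l : ℝ}
    (hl : Tendsto (fun k => eval (x k) h) U (𝓝 l)) : eval xs (initialForm h q) = 0 := by
  obtain ⟨κ₀, hκ₀, hκ₀D⟩ := exists_dotProduct_expVec_eq_newtonD h q
  have hquot := hx.tendsto_eval_div_exp ((Finset.subset_insert _ _).trans hF) Subset.rfl
    (hF hκ₀) hκ₀D
  have hbot := hx.tendsto_atBot 0 (hF (Finset.mem_insert_self _ _)) κ₀ (hF hκ₀)
    (by rwa [expVec_zero, dotProduct_zero, hκ₀D])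
  simp only [expVec_zero, dotProduct_zero, zero_sub] at hbot
  exact tendsto_nhds_unique hquot
    (hl.div_atTop (Real.tendsto_exp_atTop.comp (tendsto_neg_atBot_iff.1 hbot)))

lemma eventually_eval_eq_eval_zero (hx : IsTropicalLimit U x τ q xs F)
    (hconst : ¬ NotConstOn h (Function.support xs)) : ∀ᶠ k in U, eval (x k) h = eval 0 h := by
  filter_upwards [hx.eventually_mem_RJ] with k hk
  by_contra hne
  exact hconst ⟨_, hk, 0, fun _ _ => rfl, hne⟩

lemma eventually_eval_rescale_nonpos [U.NeBot] (hx : IsTropicalLimit U x τ q xs F)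
    (hF : insert 0 h.support ⊆ F) (hle : ∀ᶠ k in U, eval (x k) h ≤ 0) {w : Fin n → ℝ}
    (hw : NotConstOn h (Function.support xs) → eval xs (initialForm h q) = 0 →
      eval xs (eulerDeriv w (initialForm h q)) < 0) :
    ∀ᶠ k in U, ∀ᶠ t in 𝓝[>] (0 : ℝ), eval (rescale (t • w) (x k)) h ≤ 0 := by
  by_cases hconst : NotConstOn h (Function.support xs)
  · rcases (hx.eval_initialForm_nonpos hF hle).lt_or_eq with hneg | hzero
    · filter_upwards [hx.eventually_eval_neg hF Subset.rfl hneg] with k hk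
      exact (eventually_eval_rescale_neg w hk).mono fun t ht => ht.le
    · filter_upwards [hx.eventually_eval_eulerDeriv_neg hF (hw hconst hzero), hle] with k hk hlek
      exact (eventually_eval_rescale_lt hk).mono fun t ht => ht.le.trans hlek
  · filter_upwards [hx.eventually_mem_RJ, hle] with k hk hlek
    refine .of_forall fun t => ?_
    by_contra! hpos
    exact hconst ⟨_, rescale_mem_RJ hk (t • w), _, hk, (hlek.trans_lt hpos).ne'⟩

end IsTropicalLimit

end InitialFormLimits

section SquaredNorm

variable {ι : Type*} {n : ℕ} {U : Filter ι} {x τ : ι → Fin n → ℝ} {q xs : Fin n → ℝ}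
  {F : Finset (Fin n →₀ ℕ)}

/-- The squared Euclidean norm as a polynomial: the function that drives points to infinity. -/
def sqNorm (n : ℕ) : MvPolynomial (Fin n) ℝ := ∑ j, X j ^ 2

lemma eval_sqNorm (x : Fin n → ℝ) : eval x (sqNorm n) = ∑ j, x j ^ 2 := by
  simp [sqNorm]

lemma exists_eq_single_of_mem_support_sqNorm {κ : Fin n →₀ ℕ} (hκ : κ ∈ (sqNorm n).support) :
    ∃ j, κ = Finsupp.single j 2 := by
  by_contra! hne
  simp [sqNorm, coeff_sum, coeff_X_pow, (hne _).symm] at hκ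

lemma eval_facePoly_sqNorm (x : Fin n → ℝ) (Δ : Set (Fin n → ℝ)) :
    eval x (facePoly (sqNorm n) Δ) =
      ∑ j, if expVec (Finsupp.single j 2) ∈ Δ then x j ^ 2 else 0 := by
  have hface : facePoly (sqNorm n) Δ =
      ∑ j, if expVec (Finsupp.single j 2) ∈ Δ then X j ^ 2 else 0 := by
    ext κ
    simp only [coeff_facePoly, sqNorm, coeff_sum, apply_ite (coeff κ), coeff_X_pow, coeff_zero]
    split_ifs with hκ
    · exact Finset.sum_congr rfl fun j _ => by grind
    · exact (Finset.sum_eq_zero fun j _ => by grind).symm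
  simp [hface, apply_ite (eval x)]

lemma isCompact_sublevel_sqNorm (C : ℝ) : IsCompact {x | eval x (sqNorm n) ≤ C} := by
  refine Metric.isCompact_of_isClosed_isBounded
    (isClosed_le (continuous_eval _) continuous_const) ?_
  refine (isBounded_iff_forall_norm_le).2 ⟨√C, fun x (hx : eval x (sqNorm n) ≤ C) => ?_⟩
  rw [eval_sqNorm] at hx
  refine (pi_norm_le_iff_of_nonneg (Real.sqrt_nonneg C)).2 fun j => Real.abs_le_sqrt ?_
  exact (Finset.single_le_sum (fun j _ => sq_nonneg (x j)) (Finset.mem_univ j)).trans hx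

namespace IsTropicalLimit

lemma newtonD_sqNorm_neg [U.NeBot] (hx : IsTropicalLimit U x τ q xs F)
    (hF : insert 0 (sqNorm n).support ⊆ F)
    (hlarge : Tendsto (fun k => eval (x k) (sqNorm n)) U atTop) : NewtonD (sqNorm n) q < 0 := by
  by_contra! hD
  rcases hD.eq_or_lt with hD | hD
  · exact not_tendsto_nhds_of_tendsto_atTop hlarge _
      (hx.tendsto_eval_of_newtonD_eq_zero hF hD.symm)
  · exact not_tendsto_nhds_of_tendsto_atTop hlarge _ (hx.tendsto_eval_of_newtonD_pos hF hD)

lemma newtonFace_sqNorm_subset_RJ [U.NeBot] (hx : IsTropicalLimit U x τ q xs F)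
    (hF : insert 0 (sqNorm n).support ⊆ F)
    (hlarge : Tendsto (fun k => eval (x k) (sqNorm n)) U atTop) :
    NewtonFace (sqNorm n) q ⊆ RJ (Function.support xs) := by
  refine hx.newtonFace_subset_RJ ((Finset.subset_insert _ _).trans hF) (of_not_not fun hconst => ?_)
  exact not_tendsto_nhds_of_tendsto_atTop hlarge _
    (tendsto_const_nhds.congr' ((hx.eventually_eval_eq_eval_zero hconst).mono fun _ => Eq.symm))

lemma exists_single_mem_newtonFace_sqNorm [U.NeBot] (hx : IsTropicalLimit U x τ q xs F)
    (hF : insert 0 (sqNorm n).support ⊆ F)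
    (hlarge : Tendsto (fun k => eval (x k) (sqNorm n)) U atTop) :
    ∃ j ∈ Function.support xs, q j < 0 ∧ expVec (Finsupp.single j 2) ∈ NewtonFace (sqNorm n) q := by
  have hD := hx.newtonD_sqNorm_neg hF hlarge
  obtain ⟨κ, hκ, hκD⟩ := exists_dotProduct_expVec_eq_newtonD (sqNorm n) q
  rcases Finset.mem_insert.1 hκ with rfl | hκ
  · simp [← hκD, expVec_zero] at hD
  obtain ⟨j, rfl⟩ := exists_eq_single_of_mem_support_sqNorm hκ
  have hface := (expVec_mem_newtonFace_iff hκ).2 hκD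
  refine ⟨j, ?_, ?_, hface⟩
  · by_contra hj
    simpa [expVec] using hx.newtonFace_sqNorm_subset_RJ hF hlarge hface j hj
  · have hqj : q ⬝ᵥ expVec (Finsupp.single j 2) = 2 * q j := by
      simp [dotProduct, expVec, Finsupp.single_apply, mul_comm]
    linarith

lemma eval_initialForm_sqNorm_pos [U.NeBot] (hx : IsTropicalLimit U x τ q xs F)
    (hF : insert 0 (sqNorm n).support ⊆ F)
    (hlarge : Tendsto (fun k => eval (x k) (sqNorm n)) U atTop) :
    0 < eval xs (initialForm (sqNorm n) q) := by
  obtain ⟨j, hj, -, hface⟩ := hx.exists_single_mem_newtonFace_sqNorm hF hlarge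
  rw [initialForm, eval_facePoly_sqNorm]
  refine Finset.sum_pos' (fun i _ => by positivity) ⟨j, Finset.mem_univ j, ?_⟩
  rw [if_pos hface]
  exact sq_pos_of_ne_zero hj

end IsTropicalLimit

end SquaredNorm

section OptimalityAtInfinity

variable {ι α : Type*} {n : ℕ} {f : α → MvPolynomial (Fin n) ℝ} {o : α} {m : ℝ} {U : Filter ι}
  {x τ : ι → Fin n → ℝ} {q xs : Fin n → ℝ} {F : Finset (Fin n →₀ ℕ)}

/-- The constraint set `S` of the problem of minimising `f o` subject to `f i ≤ 0` for `i ≠ o`. -/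
def feasibleSet (f : α → MvPolynomial (Fin n) ℝ) (o : α) : Set (Fin n → ℝ) :=
  {x | ∀ i, i ≠ o → eval x (f i) ≤ 0}

/-- The objective and the active constraints of the problem at infinity given by the weight `q`
and the point `xs`, restricted to those that are not constant on `ℝ^J`, `J` the support of `xs`. -/
def activeSet (f : α → MvPolynomial (Fin n) ℝ) (o : α) (q xs : Fin n → ℝ) : Set α :=
  {i | NotConstOn (f i) (Function.support xs) ∧ (i = o ∨ eval xs (initialForm (f i) q) = 0)}

/-- Tropical limit of points `x k` that minimise `f o` among the feasible points of norm at most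
`‖x k‖`, with `‖x k‖ → ∞` and with values `f o (x k)` tending to `m` without reaching it. -/
structure IsMinimizerTropicalLimit (U : Filter ι) (f : α → MvPolynomial (Fin n) ℝ) (o : α) (m : ℝ)
    (x τ : ι → Fin n → ℝ) (q xs : Fin n → ℝ) (F : Finset (Fin n →₀ ℕ)) : Prop
    extends IsTropicalLimit U x τ q xs F where
  support_sqNorm_subset : insert 0 (sqNorm n).support ⊆ F
  support_subset : ∀ i, insert 0 (f i).support ⊆ F
  mem_feasibleSet : ∀ k, x k ∈ feasibleSet f o
  isMinOn : ∀ k, IsMinOn (fun y => eval y (f o))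
    (feasibleSet f o ∩ {y | eval y (sqNorm n) ≤ eval (x k) (sqNorm n)}) (x k)
  tendsto_sqNorm : Tendsto (fun k => eval (x k) (sqNorm n)) U atTop
  tendsto_value : Tendsto (fun k => eval (x k) (f o)) U (𝓝 m)
  value_ne : ∀ k, eval (x k) (f o) ≠ m

lemma isClosed_feasibleSet (f : α → MvPolynomial (Fin n) ℝ) (o : α) :
    IsClosed (feasibleSet f o) := by
  simp only [feasibleSet, ofPred_forall]
  exact isClosed_iInter fun i => isClosed_iInter fun _ =>
    isClosed_le (continuous_eval _) continuous_const

theorem exists_isMinimizerTropicalLimit [Finite α] (hne : (feasibleSet f o).Nonempty)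
    (hbdd : BddBelow ((fun y => eval y (f o)) '' feasibleSet f o))
    (hnotatt : ∀ y ∈ feasibleSet f o,
      eval y (f o) ≠ sInf ((fun y => eval y (f o)) '' feasibleSet f o)) :
    ∃ (U : Ultrafilter ℕ) (x τ : ℕ → Fin n → ℝ) (q xs : Fin n → ℝ) (F : Finset (Fin n →₀ ℕ)),
      IsMinimizerTropicalLimit U f o (sInf ((fun y => eval y (f o)) '' feasibleSet f o))
        x τ q xs F := by
  cases nonempty_fintype α
  have hcont : ContinuousOn (fun y => eval y (f o)) (feasibleSet f o) :=
    (continuous_eval _).continuousOn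
  have hcompact (C : ℝ) : IsCompact (feasibleSet f o ∩ {y | eval y (sqNorm n) ≤ C}) :=
    (isCompact_sublevel_sqNorm C).inter_left (isClosed_feasibleSet f o)
  obtain ⟨x, hx, hlim⟩ := exists_isMinOn_sublevel_seq hne hcont hbdd hcompact
  have hvalue := hlim.mono_left Nat.hyperfilter_le_atTop
  have hnorm := tendsto_atTop_of_tendsto_of_forall_ne hcont hcompact (fun k => (hx k).1) hvalue
    hnotatt
  obtain ⟨τ, q, xs, htrop⟩ := exists_isTropicalLimit (hyperfilter ℕ) hnorm x
    (insert 0 ((sqNorm n).support ∪ Finset.univ.biUnion fun i => (f i).support))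
  have hsub (i : α) := Finset.subset_biUnion_of_mem (fun i => (f i).support) (Finset.mem_univ i)
  exact ⟨hyperfilter ℕ, x, τ, q, xs, _,
    { toIsTropicalLimit := htrop
      support_sqNorm_subset := Finset.insert_subset_insert _ Finset.subset_union_left
      support_subset i :=
        Finset.insert_subset_insert _ ((hsub i).trans Finset.subset_union_right)
      mem_feasibleSet k := (hx k).1
      isMinOn k := (hx k).2
      tendsto_sqNorm := hnorm
      tendsto_value := hvalue
      value_ne k := hnotatt _ (hx k).1 }⟩

lemma eval_eulerDeriv_nonneg_of_isMinOn {S : Set (Fin n → ℝ)} {g φ : MvPolynomial (Fin n) ℝ}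
    {x w : Fin n → ℝ} (hmin : IsMinOn (fun y => eval y g) (S ∩ {y | eval y φ ≤ eval x φ}) x)
    (hS : ∀ᶠ t in 𝓝[>] (0 : ℝ), rescale (t • w) x ∈ S) (hφ : eval x (eulerDeriv w φ) < 0) :
    0 ≤ eval x (eulerDeriv w g) := by
  by_contra! hg
  obtain ⟨t, htS, htφ, htg⟩ := (hS.and
    ((eventually_eval_rescale_lt hφ).and (eventually_eval_rescale_lt hg))).exists
  exact htg.not_ge (hmin ⟨htS, htφ.le⟩)

namespace IsMinimizerTropicalLimit

lemma notConstOn_objective [U.NeBot] (hx : IsMinimizerTropicalLimit U f o m x τ q xs F) :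
    NotConstOn (f o) (Function.support xs) := by
  by_contra hconst
  have heq := hx.eventually_eval_eq_eval_zero hconst
  obtain rfl : eval 0 (f o) = m :=
    tendsto_nhds_unique (tendsto_const_nhds.congr' (heq.mono fun _ => Eq.symm)) hx.tendsto_value
  obtain ⟨k, hk⟩ := heq.exists
  exact hx.value_ne k hk

lemma newtonFace_subset_RJ (hx : IsMinimizerTropicalLimit U f o m x τ q xs F) {i : α}
    (hi : NotConstOn (f i) (Function.support xs)) :
    NewtonFace (f i) q ⊆ RJ (Function.support xs) :=
  hx.toIsTropicalLimit.newtonFace_subset_RJ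
    ((Finset.subset_insert _ _).trans (hx.support_subset i)) hi

lemma eval_initialForm_nonpos [U.NeBot] (hx : IsMinimizerTropicalLimit U f o m x τ q xs F)
    {i : α} (hi : i ≠ o) : eval xs (initialForm (f i) q) ≤ 0 :=
  hx.toIsTropicalLimit.eval_initialForm_nonpos (hx.support_subset i)
    (.of_forall fun k => hx.mem_feasibleSet k i hi)

lemma exists_mem_support_neg [U.NeBot] (hx : IsMinimizerTropicalLimit U f o m x τ q xs F) :
    ∃ j ∈ Function.support xs, q j < 0 := by
  obtain ⟨j, hj, hqj, -⟩ :=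
    hx.exists_single_mem_newtonFace_sqNorm hx.support_sqNorm_subset hx.tendsto_sqNorm
  exact ⟨j, hj, hqj⟩

lemma exists_eulerDeriv_sqNorm_neg [U.NeBot] (hx : IsMinimizerTropicalLimit U f o m x τ q xs F)
    (v : Fin n → ℝ) :
    ∃ C : ℝ, eval xs (eulerDeriv (v / xs + C • q) (initialForm (sqNorm n) q)) < 0 := by
  have hneg : NewtonD (sqNorm n) q * eval xs (initialForm (sqNorm n) q) < 0 :=
    mul_neg_of_neg_of_pos (hx.newtonD_sqNorm_neg hx.support_sqNorm_subset hx.tendsto_sqNorm)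
      (hx.eval_initialForm_sqNorm_pos hx.support_sqNorm_subset hx.tendsto_sqNorm)
  simp only [eval_eulerDeriv_div_add_smul
    (hx.newtonFace_sqNorm_subset_RJ hx.support_sqNorm_subset hx.tendsto_sqNorm)]
  refine ⟨-(gradAt (initialForm (sqNorm n) q) xs ⬝ᵥ v + 1) /
    (NewtonD (sqNorm n) q * eval xs (initialForm (sqNorm n) q)), ?_⟩
  rw [div_mul_cancel₀ _ hneg.ne]
  linarith

theorem exists_mem_activeSet_nonneg [U.NeBot] [Finite α]
    (hx : IsMinimizerTropicalLimit U f o m x τ q xs F)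
    (hobj : NewtonD (f o) q * eval xs (initialForm (f o) q) = 0) (v : Fin n → ℝ) :
    ∃ i ∈ activeSet f o q xs, 0 ≤ gradAt (initialForm (f i) q) xs ⬝ᵥ v := by
  by_contra! hv
  obtain ⟨C, hC⟩ := hx.exists_eulerDeriv_sqNorm_neg v
  set w := v / xs + C • q
  have hw (i : α) (hi : i ∈ activeSet f o q xs) :
      eval xs (eulerDeriv w (initialForm (f i) q)) < 0 := by
    have hzero : NewtonD (f i) q * eval xs (initialForm (f i) q) = 0 := by
      rcases hi.2 with rfl | hi0
      · exact hobj
      · rw [hi0, mul_zero]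
    rw [eval_eulerDeriv_div_add_smul (hx.newtonFace_subset_RJ hi.1), hzero, mul_zero, add_zero]
    exact hv i hi
  have hfeas : ∀ᶠ k in U, ∀ i, ∀ᶠ t in 𝓝[>] (0 : ℝ), i ≠ o →
      eval (rescale (t • w) (x k)) (f i) ≤ 0 := by
    refine eventually_all.2 fun i => ?_
    by_cases hi : i = o
    · exact .of_forall fun k => .of_forall fun t hio => absurd hi hio
    · refine (hx.eventually_eval_rescale_nonpos (hx.support_subset i)
        (.of_forall fun k => hx.mem_feasibleSet k i hi)
        fun hconst hzero => hw i ⟨hconst, .inr hzero⟩).mono fun k hk => hk.mono fun t ht _ => ht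
  have hnorm := hx.eventually_eval_eulerDeriv_neg hx.support_sqNorm_subset hC
  have hdescent := hx.eventually_eval_eulerDeriv_neg (hx.support_subset o)
    (hw o ⟨hx.notConstOn_objective, .inl rfl⟩)
  obtain ⟨k, hkfeas, hknorm, hkdescent⟩ := (hfeas.and (hnorm.and hdescent)).exists
  exact hkdescent.not_ge
    (eval_eulerDeriv_nonneg_of_isMinOn (hx.isMinOn k) (eventually_all.2 hkfeas) hknorm)

theorem exists_isGordanRelation [U.NeBot] [Fintype α]
    (hx : IsMinimizerTropicalLimit U f o m x τ q xs F) (hD : NewtonD (f o) q = 0) :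
    ∃ lam,
      IsGordanRelation (activeSet f o q xs) (fun i => gradAt (initialForm (f i) q) xs) lam := by
  refine exists_isGordanRelation_of_forall_dual fun φ => ?_
  obtain ⟨v, hv⟩ := (dotProductEquiv ℝ (Fin n)).surjective (φ : (Fin n → ℝ) →ₗ[ℝ] ℝ)
  obtain ⟨i, hi, hiv⟩ := hx.exists_mem_activeSet_nonneg (by rw [hD, zero_mul]) v
  refine ⟨i, hi, ?_⟩
  rwa [dotProduct_comm, ← dotProductEquiv_apply_apply, hv] at hiv

theorem newtonD_objective_nonneg [U.NeBot] {p : ℕ} {f : Fin (p + 1) → MvPolynomial (Fin n) ℝ}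
    (hx : IsMinimizerTropicalLimit U f 0 m x τ q xs F) (hMF : MFinfty f) :
    0 ≤ NewtonD (f 0) q := by
  by_contra! hD
  have hzero : eval xs (initialForm (f 0) q) = 0 :=
    hx.eval_initialForm_eq_zero_of_newtonD_neg (hx.support_subset 0) hD hx.tendsto_value
  obtain ⟨j, hj, -⟩ := hx.exists_mem_support_neg
  obtain ⟨v, -, hv⟩ := hMF (Function.support xs) ⟨j, hj⟩ q xs hD
    (fun i hi => hx.newtonFace_subset_RJ hi) (fun j => Function.notMem_support.symm)
    (fun i hi => hx.eval_initialForm_nonpos hi)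
  obtain ⟨i, ⟨hconst, hi⟩, hiv⟩ := hx.exists_mem_activeSet_nonneg (by rw [hzero, mul_zero]) v
  exact (hv i hconst (hi.elim (fun h => h ▸ hzero) id)).not_ge hiv

end IsMinimizerTropicalLimit

section Multipliers

variable [Fintype α] {lam : α → ℝ}

lemma IsGordanRelation.sum_mul_eval_pderiv
    (hlam : IsGordanRelation (activeSet f o q xs) (fun i => gradAt (initialForm (f i) q) xs) lam)
    (j : Fin n) : ∑ i, lam i * eval xs (pderiv j (initialForm (f i) q)) = 0 := by
  simpa [gradAt] using congrFun hlam.sum_smul j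

lemma IsGordanRelation.mul_eval_initialForm
    (hlam : IsGordanRelation (activeSet f o q xs) (fun i => gradAt (initialForm (f i) q) xs) lam)
    {i : α} (hi : i ≠ o) : lam i * eval xs (initialForm (f i) q) = 0 := by
  by_cases hact : i ∈ activeSet f o q xs
  · rw [hact.2.resolve_left hi, mul_zero]
  · rw [hlam.eq_zero_of_notMem i hact, zero_mul]

end Multipliers

end OptimalityAtInfinity

/-- **Theorem 3.1 (Fritz-John and Karush–Kuhn–Tucker optimality conditions at infinity).** -/
theorem kkt_at_infinity {n p : ℕ} (f : Fin (p + 1) → MvPolynomial (Fin n) ℝ)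
    (hnc : ∀ i, ∃ x y : Fin n → ℝ, eval x (f i) ≠ eval y (f i))
    (S : Set (Fin n → ℝ))
    (hS : S = {x | ∀ i, i ≠ 0 → eval x (f i) ≤ 0})
    (hSne : S.Nonempty)
    (hbdd : BddBelow ((fun x => eval x (f 0)) '' S))
    (fstar : ℝ) (hfstar : fstar = sInf ((fun x => eval x (f 0)) '' S))
    (hMF : MFinfty f)
    (hnotatt : ∀ x ∈ S, eval x (f 0) ≠ fstar) :
    fstar = 0 ∨
      ∃ (J : Set (Fin n)) (q xs : Fin n → ℝ) (lam : Fin (p + 1) → ℝ),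
        J.Nonempty ∧
        (∃ j ∈ J, q j < 0) ∧
        -- (i)
        (∀ j, xs j = 0 ↔ j ∉ J) ∧
        -- (ii)
        (fstar = eval xs (facePoly (f 0) (NewtonFace (f 0) q)) ∧
          NewtonFace (f 0) q ⊆ RJ J ∧ NewtonD (f 0) q = 0) ∧
        -- (iii)
        (∀ j : Fin n,
          ∑ i, lam i * eval xs (pderiv j (facePoly (f i) (NewtonFace (f i) q))) = 0) ∧
        -- (iv)
        (∀ i, i ≠ 0 → eval xs (facePoly (f i) (NewtonFace (f i) q)) ≤ 0 ∧
          lam i * eval xs (facePoly (f i) (NewtonFace (f i) q)) = 0) ∧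
        -- (v)
        ((∀ i, 0 ≤ lam i) ∧ lam ≠ 0) ∧
        -- moreover, under the constraint qualification the multipliers can be chosen
        -- with `λ*₀ = 1`
        ((∃ v : Fin n → ℝ, v ≠ 0 ∧ ∀ i, i ≠ 0 →
            eval xs (facePoly (f i) (NewtonFace (f i) q)) = 0 → NotConstOn (f i) J →
            ∑ j, eval xs (pderiv j (facePoly (f i) (NewtonFace (f i) q))) * v j < 0) →
          ∃ lam' : Fin (p + 1) → ℝ,
            lam' 0 = 1 ∧
            (∀ j : Fin n,
              ∑ i, lam' i * eval xs (pderiv j (facePoly (f i) (NewtonFace (f i) q))) = 0) ∧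
            (∀ i, i ≠ 0 → eval xs (facePoly (f i) (NewtonFace (f i) q)) ≤ 0 ∧
              lam' i * eval xs (facePoly (f i) (NewtonFace (f i) q)) = 0) ∧
            (∀ i, 0 ≤ lam' i)) := by
  subst hS hfstar
  obtain ⟨U, x, τ, q, xs, F, hx⟩ := exists_isMinimizerTropicalLimit hSne hbdd hnotatt
  rcases (hx.newtonD_objective_nonneg hMF).lt_or_eq with hD | hD
  · exact .inl (tendsto_nhds_unique hx.tendsto_value
      (hx.tendsto_eval_of_newtonD_pos (hx.support_subset 0) hD))
  have hvalue := tendsto_nhds_unique hx.tendsto_value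
    (hx.tendsto_eval_of_newtonD_eq_zero (hx.support_subset 0) hD.symm)
  obtain ⟨j, hj, hqj⟩ := hx.exists_mem_support_neg
  obtain ⟨lam, hlam⟩ := hx.exists_isGordanRelation hD.symm
  refine .inr ⟨Function.support xs, q, xs, lam, ⟨j, hj⟩, ⟨j, hj, hqj⟩,
    fun j => Function.notMem_support.symm,
    ⟨hvalue, hx.newtonFace_subset_RJ hx.notConstOn_objective, hD.symm⟩,
    hlam.sum_mul_eval_pderiv,
    fun i hi => ⟨hx.eval_initialForm_nonpos hi, hlam.mul_eval_initialForm hi⟩,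
    ⟨hlam.nonneg, hlam.ne_zero⟩, ?_⟩
  rintro ⟨v, -, hv⟩
  obtain ⟨lam', hlam', hlam'_one⟩ := hlam.exists_apply_eq_one
    (φ := (dotProductBilin ℝ ℝ).flip v)
    fun i hi hi0 => hv i hi0 (hi.2.resolve_left hi0) hi.1
  exact ⟨lam', hlam'_one, hlam'.sum_mul_eval_pderiv,
    fun i hi => ⟨hx.eval_initialForm_nonpos hi, hlam'.mul_eval_initialForm hi⟩, hlam'.nonneg⟩
end
end

section
/- Let f₀ : ℝⁿ → ℝ be a polynomial function. If the unconstrained problem inf_{x ∈ ℝⁿ} f₀(x) (i.e., the case p = 0, S = ℝⁿ) has the Mangasarian–Fromovitz property at infinity ((MF)∞), then f₀ is nondegenerate at infinity. -/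
open MvPolynomial Set Filter
open scoped Classical

noncomputable section

/-- The (MF)∞ property for the unconstrained problem `inf_{x ∈ ℝⁿ} f₀(x)` (case `p = 0`). -/
def MFinftyUnconstrained {n : ℕ} (f : MvPolynomial (Fin n) ℝ) : Prop :=
  ∀ J : Set (Fin n), J.Nonempty → ∀ q x : Fin n → ℝ,
    NewtonD f q < 0 →
    (NotConstOn f J → NewtonFace f q ⊆ RJ J) →
    (∀ j, x j = 0 ↔ j ∉ J) →
    NotConstOn f J →
    eval x (facePoly f (NewtonFace f q)) = 0 →
    ∃ v : Fin n → ℝ, v ≠ 0 ∧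
      ∑ j, eval x (pderiv j (facePoly f (NewtonFace f q))) * v j < 0

/-!
The polynomial `f_Δ` of the face `Δ` cut out by a covector `q` is weighted homogeneous of weight `q`
and degree `d = d(q, Γ(f))`, so Euler's identity `∑ q_j x_j ∂_j f_Δ = d f_Δ` forces `f_Δ` to vanish
at each of its critical points as soon as `d ≠ 0`. A critical point in the torus `(ℝ ∖ {0})ⁿ` is
thus a zero of `f_Δ`, where (MF)∞ with `J = {1, …, n}` provides a direction of strict descent. It
applies to this `J` because `ℝ^J = ℝⁿ` contains every face, and because `f` is not constant: a
constant has `d = 0`.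
-/

section EulerIdentity

variable {R S σ : Type*} [CommSemiring R]

theorem sum_smul_X_mul_pderiv_of_isWeightedHomogeneous [Fintype σ] [Semiring S] [Module S R]
    {w : σ → S} {d : S} {φ : MvPolynomial σ R} (hφ : IsWeightedHomogeneous w φ d) :
    ∑ i, w i • (X i * pderiv i φ) = d • φ := by
  have on_monomial : ∀ κ ∈ φ.support,
      ∑ i, w i • (X i * pderiv i (monomial κ (φ.coeff κ))) = d • monomial κ (φ.coeff κ) := by
    intro κ hκ
    have hd : ∑ i, κ i • w i = d := by
      rw [← Finsupp.weight_eq_sum]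
      exact hφ (mem_support_iff.mp hκ)
    simp_rw [X_mul_pderiv_monomial, ← hd, Finset.sum_smul, smul_assoc, smul_comm (w _)]
  conv_lhs => rw [φ.as_sum]
  conv_rhs => rw [φ.as_sum]
  simp_rw [map_sum, Finset.mul_sum, Finset.smul_sum]
  rw [Finset.sum_comm]
  exact Finset.sum_congr rfl on_monomial

theorem eval_eq_zero_of_isWeightedHomogeneous_of_eval_pderiv_eq_zero [Finite σ] [NoZeroDivisors R]
    {w : σ → R} {d : R} {φ : MvPolynomial σ R} (hφ : IsWeightedHomogeneous w φ d) (hd : d ≠ 0)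
    {x : σ → R} (hx : ∀ i, eval x (pderiv i φ) = 0) : eval x φ = 0 := by
  cases nonempty_fintype σ
  have euler := congrArg (eval x) (sum_smul_X_mul_pderiv_of_isWeightedHomogeneous hφ)
  simp only [map_sum, smul_eval, map_mul, hx, mul_zero, Finset.sum_const_zero] at euler
  exact (mul_eq_zero.mp euler.symm).resolve_left hd

end EulerIdentity

section NewtonPolyhedron

variable {n : ℕ}

theorem isWeightedHomogeneous_facePoly (f : MvPolynomial (Fin n) ℝ) {Δ : Set (Fin n → ℝ)}
    {q : Fin n → ℝ} {d : ℝ} (hΔ : ∀ κ ∈ Δ, ∑ j, q j * κ j = d) :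
    IsWeightedHomogeneous q (facePoly f Δ) d := by
  refine IsWeightedHomogeneous.sum _ _ d fun κ hκ => isWeightedHomogeneous_monomial q κ _ ?_
  rw [Finsupp.weight_eq_sum, ← hΔ _ (Finset.mem_filter.mp hκ).2]
  exact Finset.sum_congr rfl fun j _ => by rw [nsmul_eq_mul, mul_comm, expVec]

theorem newtonPolyhedron_C_subset (a : ℝ) :
    NewtonPolyhedron (C a : MvPolynomial (Fin n) ℝ) ⊆ {0} := by
  refine convexHull_min ?_ (convex_singleton 0)
  rintro _ ⟨κ, hκ, rfl⟩
  obtain rfl : κ = 0 := by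
    by_contra hne
    simp [coeff_C, Ne.symm hne] at hκ
  ext j
  simp [expVec]

theorem newtonD_C (a : ℝ) (q : Fin n → ℝ) : NewtonD (C a) q = 0 := by
  -- For `a = 0` the polyhedron is empty, and the value is the junk value `sInf ∅ = 0`.
  rcases Set.subset_singleton_iff_eq.mp (newtonPolyhedron_C_subset (n := n) a) with h | h <;>
    simp [NewtonD, h]

theorem NotConstOn.nonempty {f : MvPolynomial (Fin n) ℝ} {J : Set (Fin n)}
    (hf : NotConstOn f J) : J.Nonempty := by
  obtain ⟨x, hx, y, hy, hxy⟩ := hf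
  by_contra hJ
  have hmem : ∀ j, j ∉ J := fun j hj => hJ ⟨j, hj⟩
  obtain rfl : x = y := by
    ext j
    rw [hx j (hmem j), hy j (hmem j)]
  exact hxy rfl

theorem notConstOn_univ_iff {f : MvPolynomial (Fin n) ℝ} :
    NotConstOn f univ ↔ ∀ a, f ≠ C a := by
  constructor
  · rintro ⟨x, -, y, -, hxy⟩ a rfl
    exact hxy (by simp only [eval_C])
  · intro hf
    by_contra hconst
    refine hf (eval 0 f) (MvPolynomial.funext fun x => ?_)
    rw [eval_C]
    by_contra hx
    exact hconst ⟨x, by simp [RJ], 0, by simp [RJ], hx⟩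

theorem notConstOn_univ_of_newtonD_ne_zero {f : MvPolynomial (Fin n) ℝ} {q : Fin n → ℝ}
    (hq : NewtonD f q ≠ 0) : NotConstOn f univ := by
  rw [notConstOn_univ_iff]
  rintro a rfl
  exact hq (newtonD_C a q)

end NewtonPolyhedron

/-- **Lemma 2.1, "⇐" direction.** -/
theorem MFinfty_imp_nondegenerate {n : ℕ} (f₀ : MvPolynomial (Fin n) ℝ)
    (hMF : MFinftyUnconstrained f₀) : NondegenerateAtInfinity f₀ := by
  intro q hq x hx hcrit
  have hnonconst : NotConstOn f₀ univ := notConstOn_univ_of_newtonD_ne_zero hq.ne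
  have hzero : eval x (facePoly f₀ (NewtonFace f₀ q)) = 0 :=
    eval_eq_zero_of_isWeightedHomogeneous_of_eval_pderiv_eq_zero
      (isWeightedHomogeneous_facePoly f₀ fun _ hκ => hκ.2) hq.ne hcrit
  obtain ⟨v, -, hv⟩ := hMF univ hnonconst.nonempty q x hq
    (fun _ _ _ j hj => (hj (mem_univ j)).elim) (fun j => by simp [hx j]) hnonconst hzero
  simp [hcrit] at hv
end
end
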